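/- Let φ : ℕ⁺ × ℕ⁺ → ℕ⁺ be a bijection which is a compatible ordering. Then one can choose, simultaneously for all positive integers j, finite sets S_j of positive integers and positive integers (k_n(j))_{n ∈ S_j} such that {k : 1 ≤ k ≤ j} = ⋃_{n ∈ S_j} {φ(n,m) : 1 ≤ m ≤ k_n(j)} for every j, and moreover for all positive integers j and l one has S_j ⊆ S_{j+l}, the set S_{j+l} \ S_j is disjoint from S_j, and k_n(j) ≤ k_n(j+l) for all n ∈ S_j. -/

import Mathlib

open Filter Set

/-- Let `φ : ℕ⁺ × ℕ⁺ → ℕ⁺` be a bijection which is a compatible ordering.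
Then one can choose, simultaneously for all positive integers `j`, finite sets `S j` of positive
integers and positive integers `(k j n)_{n ∈ S j}` such that
`{x : 1 ≤ x ≤ j} = ⋃_{n ∈ S j} {φ (n, m) : 1 ≤ m ≤ k j n}` for every `j`, and such that for all
positive integers `j` and `l` one has `S j ⊆ S (j + l)`, the set `S (j + l) \ S j` is disjoint
from `S j`, and `k j n ≤ k (j + l) n` for all `n ∈ S j`. -/
theorem stmt1 (φ : ℕ+ × ℕ+ → ℕ+) (hbij : Function.Bijective φ)
    (hcomp : ∀ (n : ℕ+) (m m' : ℕ+), m < m' → φ (n, m) < φ (n, m')) :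
    ∃ (S : ℕ+ → Finset ℕ+) (k : ℕ+ → ℕ+ → ℕ+),
      (∀ j : ℕ+,
        {x : ℕ+ | x ≤ j} = ⋃ n ∈ S j, {x : ℕ+ | ∃ m : ℕ+, m ≤ k j n ∧ φ (n, m) = x}) ∧
      (∀ j l : ℕ+,
        S j ⊆ S (j + l) ∧ Disjoint (S (j + l) \ S j) (S j) ∧
          ∀ n ∈ S j, k j n ≤ k (j + l) n) := by
  classical
  have hmono : ∀ n : ℕ+, StrictMono (fun m => φ (n, m)) := fun n m m' h => hcomp n m m' h
  have hle : ∀ n m : ℕ+, m ≤ φ (n, m) := fun n m => (hmono n).le_apply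
  have hk : ∀ j n : ℕ+, ∃ k : ℕ+, φ (n, 1) ≤ j → ∀ m, m ≤ k ↔ φ (n, m) ≤ j := by
    intro j n
    by_cases h : φ (n, 1) ≤ j
    · obtain ⟨k, hk, hmax⟩ := Finset.exists_max_image
        ((Finset.Icc 1 j).filter (fun m => φ (n, m) ≤ j)) id
        ⟨1, by simp [h]⟩
      rw [Finset.mem_filter] at hk
      refine ⟨k, fun _ m => ⟨fun hm => ((hmono n).monotone hm).trans hk.2, fun hm => ?_⟩⟩
      exact hmax m (by
        rw [Finset.mem_filter, Finset.mem_Icc]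
        exact ⟨⟨PNat.one_le m, (hle n m).trans hm⟩, hm⟩)
    · exact ⟨1, fun h' => absurd h' h⟩
  choose k hk using hk
  have hfin : ∀ j : ℕ+, {n : ℕ+ | φ (n, 1) ≤ j}.Finite := by
    intro j
    refine Set.Finite.preimage (f := fun n : ℕ+ => φ (n, 1)) ?_ (Set.finite_Iic j)
    intro a _ b _ hab
    exact congrArg Prod.fst (hbij.1 hab)
  refine ⟨fun j => (hfin j).toFinset, k, fun j => ?_, fun j l => ?_⟩
  · ext x
    simp only [Set.mem_setOf_eq, Set.mem_iUnion, Set.Finite.mem_toFinset, exists_prop]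
    constructor
    · intro hx
      obtain ⟨⟨n, m⟩, rfl⟩ := hbij.2 x
      have h1 : φ (n, 1) ≤ j := ((hmono n).monotone (PNat.one_le m)).trans hx
      exact ⟨n, h1, m, (hk j n h1 m).2 hx, rfl⟩
    · rintro ⟨n, h1, m, hm, rfl⟩
      exact (hk j n h1 m).1 hm
  · have hjl : j ≤ j + l := (PNat.lt_add_right j l).le
    refine ⟨fun n hn => ?_, Finset.sdiff_disjoint, fun n hn => ?_⟩
    · simp only [Set.Finite.mem_toFinset, Set.mem_setOf_eq] at hn ⊢
      exact hn.trans hjl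
    · simp only [Set.Finite.mem_toFinset, Set.mem_setOf_eq] at hn
      exact (hk (j + l) n (hn.trans hjl) _).2 (((hk j n hn _).1 le_rfl).trans hjl)
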